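/- Let H = π(G) be a squared Horton set and let Δ be a triple of points of G such that π(Δ) spans an empty triangle of H. Then either the three points of Δ are collinear (Δ is degenerate), or no point of G lies in the interior of the triangle spanned by Δ. -/

import Mathlib

open scoped Classical

noncomputable section

/-- Euclidean distance between two points of the plane `ℝ × ℝ`. -/
def elen (p q : ℝ × ℝ) : ℝ := Real.sqrt ((p.1 - q.1) ^ 2 + (p.2 - q.2) ^ 2)

/-- Orientation determinant of an ordered triple of points. -/
def orient (a b c : ℝ × ℝ) : ℝ :=
  (b.1 - a.1) * (c.2 - a.2) - (b.2 - a.2) * (c.1 - a.1)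

/-- A planar point set is in general position if no three distinct points are collinear. -/
def GeneralPosition (S : Set (ℝ × ℝ)) : Prop :=
  ∀ a ∈ S, ∀ b ∈ S, ∀ c ∈ S, a ≠ b → a ≠ c → b ≠ c →
    ¬ Collinear ℝ ({a, b, c} : Set (ℝ × ℝ))

/-- No two points of `S` share an `x`-coordinate. -/
def DistinctX (S : Set (ℝ × ℝ)) : Prop :=
  ∀ a ∈ S, ∀ b ∈ S, a ≠ b → a.1 ≠ b.1

/-- `p` lies strictly below the (non-vertical) line through `a` and `b`, where `a.1 < b.1`. -/
def StrictlyBelow (p a b : ℝ × ℝ) : Prop :=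
  (b.1 - a.1) * (p.2 - a.2) < (b.2 - a.2) * (p.1 - a.1)

/-- `p` lies strictly above the (non-vertical) line through `a` and `b`, where `a.1 < b.1`. -/
def StrictlyAbove (p a b : ℝ × ℝ) : Prop :=
  (b.2 - a.2) * (p.1 - a.1) < (b.1 - a.1) * (p.2 - a.2)

/-- `Y` is high above `X`: every line through two points of `Y` is above every point of `X`. -/
def HighAbove (Y X : Set (ℝ × ℝ)) : Prop :=
  ∀ a ∈ Y, ∀ b ∈ Y, a.1 < b.1 → ∀ p ∈ X, StrictlyBelow p a b

/-- `X` is deep below `Y`: every line through two points of `X` is below every point of `Y`. -/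
def DeepBelow (X Y : Set (ℝ × ℝ)) : Prop :=
  ∀ a ∈ X, ∀ b ∈ X, a.1 < b.1 → ∀ p ∈ Y, StrictlyAbove p a b

/-- The even-indexed points of `H` in increasing order of `x`-coordinate (`H₀`). -/
def evenPart (H : Finset (ℝ × ℝ)) : Finset (ℝ × ℝ) :=
  H.filter fun p => Even (H.filter fun q => q.1 < p.1).card

/-- The odd-indexed points of `H` in increasing order of `x`-coordinate (`H₁`). -/
def oddPart (H : Finset (ℝ × ℝ)) : Finset (ℝ × ℝ) :=
  H.filter fun p => ¬ Even (H.filter fun q => q.1 < p.1).card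

/-- Horton sets. -/
inductive IsHorton : Finset (ℝ × ℝ) → Prop
  | small (H : Finset (ℝ × ℝ)) (hgp : GeneralPosition ↑H) (hx : DistinctX ↑H)
      (hcard : H.card ≤ 2) : IsHorton H
  | split (H : Finset (ℝ × ℝ)) (hgp : GeneralPosition ↑H) (hx : DistinctX ↑H)
      (hcard : 2 < H.card) (h0 : IsHorton (evenPart H)) (h1 : IsHorton (oddPart H))
      (hhigh : HighAbove ↑(oddPart H) ↑(evenPart H))
      (hdeep : DeepBelow ↑(evenPart H) ↑(oddPart H)) : IsHorton H

/-- `t` is an empty triangle of the point set `S`: a three-element non-collinear subset of `S`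
whose open interior contains no point of `S`. -/
def IsEmptyTriangleOf (S : Set (ℝ × ℝ)) (t : Finset (ℝ × ℝ)) : Prop :=
  t.card = 3 ∧ (↑t : Set (ℝ × ℝ)) ⊆ S ∧ ¬ Collinear ℝ (↑t : Set (ℝ × ℝ)) ∧
    ∀ p ∈ S, p ∉ interior (convexHull ℝ (↑t : Set (ℝ × ℝ)))

/-- `τ S`: the number of empty triangles of `S`. -/
def tau (S : Set (ℝ × ℝ)) : ℕ :=
  {t : Finset (ℝ × ℝ) | IsEmptyTriangleOf S t}.ncard

/-- The number of empty triangles of `S` stabbed by the point `q`. -/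
def stabbedCount (S : Set (ℝ × ℝ)) (q : ℝ × ℝ) : ℕ :=
  {t : Finset (ℝ × ℝ) | IsEmptyTriangleOf S t ∧
    q ∈ interior (convexHull ℝ (↑t : Set (ℝ × ℝ)))}.ncard

/-- The number of empty triangles of `S` having `q` as a vertex. -/
def incidentCount (S : Set (ℝ × ℝ)) (q : ℝ × ℝ) : ℕ :=
  {t : Finset (ℝ × ℝ) | IsEmptyTriangleOf S t ∧ q ∈ t}.ncard

/-- The `m × m` integer grid `{1,…,m} × {1,…,m}`, viewed inside `ℝ × ℝ`. -/
def grid (m : ℕ) : Finset (ℝ × ℝ) :=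
  (Finset.Icc 1 m ×ˢ Finset.Icc 1 m).image fun p => ((p.1 : ℝ), (p.2 : ℝ))

/-- The points of the grid on the line spanned by `a` and `b`. -/
def gridLine (m : ℕ) (a b : ℝ × ℝ) : Finset (ℝ × ℝ) :=
  (grid m).filter fun x => Collinear ℝ ({a, b, x} : Set (ℝ × ℝ))

/-- Rotation of the plane by (minus) 90 degrees. -/
def rotCW (p : ℝ × ℝ) : ℝ × ℝ := (p.2, -p.1)

/-- `f` is an `ε`-perturbation of the grid `{1,…,m} × {1,…,m}` turning it into a
squared Horton set (of `m ^ 2` points). -/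
structure IsSquaredHorton (m : ℕ) (ε : ℝ) (f : ℝ × ℝ → ℝ × ℝ) : Prop where
  eps_pos : 0 < ε
  eps_lt : ε < 1 / 4
  inj : Set.InjOn f ↑(grid m)
  close : ∀ p ∈ grid m, elen (f p) p ≤ ε
  orient_iff : ∀ a ∈ grid m, ∀ b ∈ grid m, ∀ c ∈ grid m,
    orient a b c ≠ 0 → (0 < orient a b c ↔ 0 < orient (f a) (f b) (f c))
  nonvertical : ∀ a ∈ grid m, ∀ b ∈ grid m, a ≠ b → a.1 ≠ b.1 →
    IsHorton ((gridLine m a b).image f)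
  vertical : ∀ a ∈ grid m, ∀ b ∈ grid m, a ≠ b → a.1 = b.1 →
    IsHorton (((gridLine m a b).image f).image rotCW)

lemma aux_pos (a b c p : ℝ × ℝ) (h : 0 < orient a b c)
    (hp : p ∈ interior (convexHull ℝ ({a, b, c} : Set (ℝ × ℝ)))) : 0 < orient a b p := by
  have hsub : convexHull ℝ ({a, b, c} : Set (ℝ × ℝ)) ⊆ {q | 0 ≤ orient a b q} := by
    apply convexHull_min
    · rintro q (rfl | rfl | rfl)
      · simp [orient]
      · simp only [orient, Set.mem_ofPred_eq]; apply le_of_eq; ring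
      · exact h.le
    · intro x hx y hy s t hs ht hst
      simp only [orient, Set.mem_ofPred_eq, Prod.fst_add, Prod.snd_add, Prod.smul_fst,
        Prod.smul_snd, smul_eq_mul] at *
      have h1 := mul_nonneg hs hx
      have h2 := mul_nonneg ht hy
      have : t = 1 - s := by linarith
      subst this
      nlinarith
  have hc : Continuous (fun t : ℝ => ((p.1 + t * (b.2 - a.2), p.2 - t * (b.1 - a.1)) : ℝ × ℝ)) := by
    fun_prop
  have hn := hc.continuousAt.preimage_mem_nhds (x := 0)
    (t := convexHull ℝ ({a, b, c} : Set (ℝ × ℝ))) (by simpa using mem_interior_iff_mem_nhds.1 hp)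
  obtain ⟨δ, hδ, hb⟩ := Metric.mem_nhds_iff.1 hn
  have h2 : (δ / 2) ∈ Metric.ball (0 : ℝ) δ := by
    simp [abs_of_pos hδ]; linarith
  have h3 := hsub (hb h2)
  simp only [orient, Set.mem_ofPred_eq] at h3 h ⊢
  have hv : 0 < (b.1 - a.1) ^ 2 + (b.2 - a.2) ^ 2 := by
    by_contra hcon
    have e1 : b.1 - a.1 = 0 := by nlinarith [sq_nonneg (b.1 - a.1), sq_nonneg (b.2 - a.2)]
    have e2 : b.2 - a.2 = 0 := by nlinarith [sq_nonneg (b.1 - a.1), sq_nonneg (b.2 - a.2)]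
    rw [e1, e2] at h
    simp at h
  nlinarith [mul_pos hδ hv]

lemma aux_int (a b c p : ℝ × ℝ) (h1 : 0 < orient a b p) (h2 : 0 < orient b c p)
    (h3 : 0 < orient c a p) : p ∈ interior (convexHull ℝ ({a, b, c} : Set (ℝ × ℝ))) := by
  rw [mem_interior]
  refine ⟨{q | 0 < orient a b q} ∩ {q | 0 < orient b c q} ∩ {q | 0 < orient c a q}, ?_, ?_,
    ⟨h1, h2⟩, h3⟩
  · rintro q ⟨⟨q1, q2⟩, q3⟩
    simp only [Set.mem_ofPred_eq] at q1 q2 q3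
    have hD : 0 < orient a b q + orient b c q + orient c a q := by linarith
    have hcv := convex_convexHull ℝ ({a, b, c} : Set (ℝ × ℝ))
    have ma := subset_convexHull ℝ ({a, b, c} : Set (ℝ × ℝ)) (show a ∈ _ by simp)
    have mb := subset_convexHull ℝ ({a, b, c} : Set (ℝ × ℝ)) (show b ∈ _ by simp)
    have mc := subset_convexHull ℝ ({a, b, c} : Set (ℝ × ℝ)) (show c ∈ _ by simp)
    set D := orient a b q + orient b c q + orient c a q with hDd
    have key := hcv.sum_mem (t := Finset.univ)
      (w := ![orient b c q / D, orient c a q / D, orient a b q / D]) (z := ![a, b, c])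
      (by intro i _; fin_cases i <;> simp <;> positivity)
      (by simp [Fin.sum_univ_three]; field_simp; rw [hDd]; ring)
      (by intro i _; fin_cases i <;> simpa)
    convert key using 1
    simp only [Fin.sum_univ_three, Matrix.cons_val]
    ext
    · simp only [Prod.fst_add, Prod.smul_fst, smul_eq_mul]
      field_simp
      simp only [hDd, orient]; ring
    · simp only [Prod.snd_add, Prod.smul_snd, smul_eq_mul]
      field_simp
      simp only [hDd, orient]; ring
  · refine ((isOpen_lt ?_ ?_).inter (isOpen_lt ?_ ?_)).inter (isOpen_lt ?_ ?_) <;>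
      (try unfold orient) <;> fun_prop

lemma aux_coll (a b c : ℝ × ℝ) (hab : a ≠ b) (h : orient a b c = 0) :
    Collinear ℝ ({a, b, c} : Set (ℝ × ℝ)) := by
  rw [collinear_iff_of_mem (p₀ := a) (by simp)]
  refine ⟨b - a, ?_⟩
  rintro q (rfl | rfl | rfl)
  · exact ⟨0, by simp⟩
  · exact ⟨1, by simp⟩
  · unfold orient at h
    by_cases h1 : b.1 - a.1 = 0
    · have h2 : b.2 - a.2 ≠ 0 := fun h2 => hab (Prod.ext (by linarith) (by linarith))
      refine ⟨(q.2 - a.2) / (b.2 - a.2), ?_⟩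
      ext
      · simp; field_simp; linarith
      · simp; field_simp; ring
    · refine ⟨(q.1 - a.1) / (b.1 - a.1), ?_⟩
      ext
      · simp; field_simp; ring
      · simp; field_simp; linarith

lemma orient_cyc (a b c : ℝ × ℝ) : orient b c a = orient a b c := by unfold orient; ring

lemma orient_swap (a b c : ℝ × ℝ) : orient a c b = - orient a b c := by unfold orient; ring

lemma aux_main (m : ℕ) (ε : ℝ) (f : ℝ × ℝ → ℝ × ℝ) (hsq : IsSquaredHorton m ε f)
    (a b c p : ℝ × ℝ) (ha : a ∈ grid m) (hb : b ∈ grid m) (hc : c ∈ grid m) (hp : p ∈ grid m)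
    (h : 0 < orient a b c)
    (hi : p ∈ interior (convexHull ℝ ({a, b, c} : Set (ℝ × ℝ)))) :
    f p ∈ interior (convexHull ℝ ({f a, f b, f c} : Set (ℝ × ℝ))) := by
  have e1 : ({b, c, a} : Set (ℝ × ℝ)) = {a, b, c} := by ext; simp; tauto
  have e2 : ({c, a, b} : Set (ℝ × ℝ)) = {a, b, c} := by ext; simp; tauto
  have h1 := aux_pos a b c p h hi
  have h2 := aux_pos b c a p (by rwa [orient_cyc]) (by rwa [e1])
  have h3 := aux_pos c a b p (by rwa [orient_cyc, orient_cyc]) (by rwa [e2])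
  exact aux_int _ _ _ _ ((hsq.orient_iff a ha b hb p hp h1.ne').1 h1)
    ((hsq.orient_iff b hb c hc p hp h2.ne').1 h2) ((hsq.orient_iff c hc a ha p hp h3.ne').1 h3)

/-- If a triple of grid points maps under the perturbation of a squared Horton set to an
empty triangle, then it is either degenerate (collinear) or interior-empty in the grid. -/
theorem empty_triangle_degenerate_or_interior_empty (m : ℕ) (ε : ℝ)
    (f : ℝ × ℝ → ℝ × ℝ) (hsq : IsSquaredHorton m ε f) (a b c : ℝ × ℝ)
    (ha : a ∈ grid m) (hb : b ∈ grid m) (hc : c ∈ grid m)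
    (hab : a ≠ b) (hac : a ≠ c) (hbc : b ≠ c)
    (hempty : IsEmptyTriangleOf ↑((grid m).image f) {f a, f b, f c}) :
    Collinear ℝ ({a, b, c} : Set (ℝ × ℝ)) ∨
      ∀ p ∈ grid m, p ∉ interior (convexHull ℝ ({a, b, c} : Set (ℝ × ℝ))) := by
  rcases lt_trichotomy (orient a b c) 0 with h | h | h
  · right
    intro p hp hi
    have e : ∀ x y z : ℝ × ℝ, ({x, z, y} : Set (ℝ × ℝ)) = {x, y, z} := by
      intro x y z; ext; simp; tauto
    have := aux_main m ε f hsq a c b p ha hc hb hp (by rw [orient_swap]; linarith)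
      (by rwa [e])
    rw [e] at this
    refine hempty.2.2.2 (f p) (by simpa using Finset.mem_image_of_mem f hp) ?_
    simpa using this
  · left
    exact aux_coll a b c hab h
  · right
    intro p hp hi
    have := aux_main m ε f hsq a b c p ha hb hc hp h hi
    refine hempty.2.2.2 (f p) (by simpa using Finset.mem_image_of_mem f hp) ?_
    simpa using this
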